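/- Let S be a finite index set with |S| ≥ 2, let Dom_i (i ∈ S) be finite domains, let M ⊆ Π_{i∈S} Dom_i be a matching, and fix ℓ ∈ S. For each i ∈ S∖{ℓ} define the unary relation W_i = Dom_i ∖ π_i(M) (the complement of the projection of M onto coordinate i) and the binary relation M_{ℓj} = π_{{ℓ,j}}(M) ⊆ Dom_ℓ × Dom_j for j ∈ S∖{ℓ}. Then for every tuple x ∈ Π_{i∈S} Dom_i: x ∉ M if and only if either (∃ i ∈ S∖{ℓ} with x_i ∈ W_i), or there exists y : S∖{ℓ} → Dom_ℓ such that (y_j, x_j) ∈ M_{ℓj} for all j ∈ S∖{ℓ} and NAE holds for the tuple (x_ℓ, (y_j)_{j ∈ S∖{ℓ}}), i.e., ¬(∀ j ∈ S∖{ℓ}, y_j = x_ℓ). -/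

import Mathlib

/-- A relation `M ⊆ Π_{i∈S} Dom i` is a matching if any two of its tuples are
either equal or differ in every coordinate. -/
def IsMatching {S : Type*} {Dom : S → Type*} (M : Set ((i : S) → Dom i)) : Prop :=
  ∀ x ∈ M, ∀ y ∈ M, x = y ∨ ∀ i : S, x i ≠ y i

/-!
Every coordinate is injective on a matching, so a tuple of a matching is determined by any one of
its entries. Hence each `x j` in `π_j(M)` with `j ≠ ℓ` comes from a unique tuple `m ∈ M`, and the
only possible value of `y j` is `m ℓ`. If all these values equal `x ℓ`, the tuples they come from
share the coordinate `ℓ`, hence coincide, and their common value is `x`.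
-/

namespace IsMatching

variable {S : Type*} {Dom : S → Type*} {M : Set ((i : S) → Dom i)}

theorem injOn_eval (hM : IsMatching M) (i : S) : Set.InjOn (Function.eval i) M :=
  fun x hx y hy hxy => (hM x hx y hy).resolve_right fun hne => hne i hxy

theorem mem_iff_forall_ne_exists [Nontrivial S] (hM : IsMatching M) (ℓ : S)
    (x : (i : S) → Dom i) :
    x ∈ M ↔ ∀ j, j ≠ ℓ → ∃ m ∈ M, m ℓ = x ℓ ∧ m j = x j := by
  refine ⟨fun hx _ _ => ⟨x, hx, rfl, rfl⟩, fun hpairs => ?_⟩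
  obtain ⟨k, hk⟩ := exists_ne ℓ
  obtain ⟨m, hm, hmℓ, -⟩ := hpairs k hk
  have hmx : m = x := by
    funext j
    obtain rfl | hj := eq_or_ne j ℓ
    · exact hmℓ
    · obtain ⟨m', hm', hm'ℓ, hm'j⟩ := hpairs j hj
      have hmm' : m = m' := hM.injOn_eval ℓ hm hm' (hmℓ.trans hm'ℓ.symm)
      exact hmm' ▸ hm'j
  exact hmx ▸ hm

end IsMatching

theorem not_mem_matching_iff_NAE_general
    {S : Type*} [Nontrivial S] {Dom : S → Type*}
    (M : Set ((i : S) → Dom i)) (hM : IsMatching M) (ℓ : S)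
    (x : (i : S) → Dom i) :
    x ∉ M ↔
      (∃ i : S, i ≠ ℓ ∧ ∀ m ∈ M, m i ≠ x i) ∨
      (∃ y : S → Dom ℓ,
        (∀ j : S, j ≠ ℓ → ∃ m ∈ M, m ℓ = y j ∧ m j = x j) ∧
        ¬ (∀ j : S, j ≠ ℓ → y j = x ℓ)) := by
  constructor
  · intro hx
    refine or_iff_not_imp_left.mpr fun hproj => ?_
    push Not at hproj
    have : Nonempty ((i : S) → Dom i) := ⟨x⟩
    choose! m hm hmx using hproj
    refine ⟨fun j => m j ℓ, fun j hj => ⟨m j, hm j hj, rfl, hmx j hj⟩, fun hyℓ => hx ?_⟩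
    exact (hM.mem_iff_forall_ne_exists ℓ x).mpr fun j hj => ⟨m j, hm j hj, hyℓ j hj, hmx j hj⟩
  · rintro (⟨i, -, hi⟩ | ⟨y, hy, hyℓ⟩) hx
    · exact hi x hx rfl
    · refine hyℓ fun j hj => ?_
      obtain ⟨m, hm, hmℓ, hmj⟩ := hy j hj
      have hmx : m = x := hM.injOn_eval j hm hx hmj
      rw [← hmℓ, hmx]

/-- Rewriting the negation of a matching via not-all-equal:
for a matching `M` on coordinates `S` (`|S| ≥ 2`) and a fixed `ℓ ∈ S`,
a tuple `x` is not in `M` iff either some coordinate value `x i` (`i ≠ ℓ`) is outside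
the projection `π_i M` (i.e. in `W_i = Dom_i ∖ π_i M`), or there is a tuple
`y : S∖{ℓ} → Dom ℓ` with `(y j, x j) ∈ π_{ℓ,j} M` for all `j ≠ ℓ` and
`NAE(x ℓ, (y j)_{j ≠ ℓ})`, i.e. not all `y j` equal `x ℓ`. -/
theorem not_mem_matching_iff_NAE
    {S : Type*} [Fintype S] {Dom : S → Type*}
    (hS : 2 ≤ Fintype.card S)
    (M : Set ((i : S) → Dom i)) (hM : IsMatching M) (ℓ : S)
    (x : (i : S) → Dom i) :
    x ∉ M ↔
      (∃ i : S, i ≠ ℓ ∧ ∀ m ∈ M, m i ≠ x i) ∨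
      (∃ y : S → Dom ℓ,
        (∀ j : S, j ≠ ℓ → ∃ m ∈ M, m ℓ = y j ∧ m j = x j) ∧
        ¬ (∀ j : S, j ≠ ℓ → y j = x ℓ)) := by
  have : Nontrivial S := Fintype.one_lt_card_iff_nontrivial.mp hS
  exact not_mem_matching_iff_NAE_general M hM ℓ x
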